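/- Let f be a smooth nonnegative function on ℝⁿ × (0,1] satisfying the heat subsolution inequality ∂ₜ f ≤ Δ f pointwise, and suppose f(·,t) → 0 in L²_loc(ℝⁿ) as t → 0⁺. Suppose there exist a constant a > 0 and a positive nondecreasing function L : (0,∞) → (0,∞) with ∫₁^∞ r / L(r) dr = ∞ such that for every r > 0, ∫₀¹ tᵃ ∫_{B(0,r)} f(x,t)² dx dt ≤ e^{L(r)}. Then f ≡ 0 on ℝⁿ × (0,1]. -/

import Mathlib

open MeasureTheory Filter Set Metric

/-- The Euclidean Laplacian of `g : ℝⁿ → ℝ`, as the sum of second partial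
derivatives along the standard coordinate directions. -/
noncomputable def heatLap {n : ℕ} (g : EuclideanSpace ℝ (Fin n) → ℝ)
    (x : EuclideanSpace ℝ (Fin n)) : ℝ :=
  ∑ i : Fin n, fderiv ℝ (fun y => fderiv ℝ g y (EuclideanSpace.single i (1 : ℝ))) x
    (EuclideanSpace.single i (1 : ℝ))

/-- The squared Euclidean length of the gradient, as a sum over the standard coordinates. -/
noncomputable def gradSq {n : ℕ} (g : EuclideanSpace ℝ (Fin n) → ℝ)
    (x : EuclideanSpace ℝ (Fin n)) : ℝ :=
  ∑ i : Fin n, (fderiv ℝ g x (EuclideanSpace.single i (1 : ℝ))) ^ 2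

lemma gradSq_nonneg {n : ℕ} (g : EuclideanSpace ℝ (Fin n) → ℝ)
    (x : EuclideanSpace ℝ (Fin n)) : 0 ≤ gradSq g x :=
  Finset.sum_nonneg fun _ _ => sq_nonneg _

lemma continuous_gradSq {n : ℕ} {g : EuclideanSpace ℝ (Fin n) → ℝ} (hg : ContDiff ℝ 1 g) :
    Continuous (gradSq g) :=
  continuous_finsetSum _ fun _ _ =>
    ((hg.continuous_fderiv one_ne_zero).clm_apply continuous_const).pow 2

lemma hasCompactSupport_gradSq {n : ℕ} {g : EuclideanSpace ℝ (Fin n) → ℝ}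
    (hg : HasCompactSupport g) : HasCompactSupport (gradSq g) := by
  refine HasCompactSupport.of_support_subset_isCompact hg.isCompact fun x hx => ?_
  by_contra hx'
  refine hx (Finset.sum_eq_zero fun i _ => ?_)
  rw [image_eq_zero_of_notMem_tsupport (f := fun x => fderiv ℝ g x _)
    (fun h => hx' (tsupport_fderiv_apply_subset ℝ _ h)), zero_pow two_ne_zero]

lemma continuous_heatLap {n : ℕ} {g : EuclideanSpace ℝ (Fin n) → ℝ} (hg : ContDiff ℝ 2 g) :
    Continuous (heatLap g) := by
  refine continuous_finsetSum _ fun i _ => ?_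
  have h : ContDiff ℝ 1 (fun y => fderiv ℝ g y (EuclideanSpace.single i (1 : ℝ))) :=
    (hg.fderiv_right (m := 1) (by norm_num)).clm_apply contDiff_const
  exact (h.continuous_fderiv one_ne_zero).clm_apply continuous_const

lemma integral_heatLap_mul {n : ℕ} {u w : EuclideanSpace ℝ (Fin n) → ℝ}
    (hu : ContDiff ℝ 2 u) (hw : ContDiff ℝ 1 w) (hc : HasCompactSupport w) :
    ∫ x, heatLap u x * w x = -∫ x, ∑ i : Fin n,
      fderiv ℝ u x (EuclideanSpace.single i 1) * fderiv ℝ w x (EuclideanSpace.single i 1) := by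
  have hD : ∀ i : Fin n,
      ContDiff ℝ 1 (fun y => fderiv ℝ u y (EuclideanSpace.single i (1 : ℝ))) := fun i =>
    (hu.fderiv_right (m := 1) (by norm_num)).clm_apply contDiff_const
  have hDD : ∀ i : Fin n, Continuous (fun x => fderiv ℝ
      (fun y => fderiv ℝ u y (EuclideanSpace.single i (1 : ℝ))) x
        (EuclideanSpace.single i (1 : ℝ))) := fun i =>
    ((hD i).continuous_fderiv one_ne_zero).clm_apply continuous_const
  have hW : ∀ i : Fin n, Continuous (fun x => fderiv ℝ w x (EuclideanSpace.single i (1 : ℝ))) :=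
    fun i => (hw.continuous_fderiv one_ne_zero).clm_apply continuous_const
  have hcW : ∀ i : Fin n,
      HasCompactSupport (fun x => fderiv ℝ w x (EuclideanSpace.single i (1 : ℝ))) := fun i =>
    hc.fderiv_apply ℝ _
  have i1 : ∀ i : Fin n, Integrable (fun x => fderiv ℝ
      (fun y => fderiv ℝ u y (EuclideanSpace.single i (1 : ℝ))) x
        (EuclideanSpace.single i (1 : ℝ)) * w x) := fun i =>
    ((hDD i).mul hw.continuous).integrable_of_hasCompactSupport hc.mul_left
  have i2 : ∀ i : Fin n, Integrable (fun x => fderiv ℝ u x (EuclideanSpace.single i (1 : ℝ)) *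
      fderiv ℝ w x (EuclideanSpace.single i (1 : ℝ))) := fun i =>
    ((hD i).continuous.mul (hW i)).integrable_of_hasCompactSupport (hcW i).mul_left
  have i3 : ∀ i : Fin n, Integrable
      (fun x => fderiv ℝ u x (EuclideanSpace.single i (1 : ℝ)) * w x) := fun i =>
    ((hD i).continuous.mul hw.continuous).integrable_of_hasCompactSupport hc.mul_left
  simp only [heatLap, Finset.sum_mul]
  rw [integral_finsetSum _ fun i _ => i1 i, integral_finsetSum _ fun i _ => i2 i,
    ← Finset.sum_neg_distrib]
  refine Finset.sum_congr rfl fun i _ => ?_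
  rw [integral_mul_fderiv_eq_neg_fderiv_mul_of_integrable (i1 i) (i2 i) (i3 i)
    (fun x _ => ((hD i).differentiable one_ne_zero) x)
    (fun x _ => (hw.differentiable one_ne_zero) x), neg_neg]

lemma integral_heatLap_mul_weight_le {n : ℕ} {u φ ξ : EuclideanSpace ℝ (Fin n) → ℝ}
    (hu : ContDiff ℝ 2 u) (hφ : ContDiff ℝ 1 φ) (hξ : ContDiff ℝ 1 ξ)
    (hc : HasCompactSupport φ) :
    ∫ x, 2 * u x * heatLap u x * (φ x ^ 2 * Real.exp (ξ x)) ≤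
      ∫ x, u x ^ 2 * (4 * gradSq φ x + φ x ^ 2 * gradSq ξ x) * Real.exp (ξ x) := by
  have hu1 : ContDiff ℝ 1 u := hu.of_le (by norm_num)
  set w : EuclideanSpace ℝ (Fin n) → ℝ := fun x => u x * (φ x ^ 2 * Real.exp (ξ x)) with hwdef
  have hw : ContDiff ℝ 1 w := hu1.mul ((hφ.pow 2).mul hξ.exp)
  have hcφ2 : HasCompactSupport (fun x => φ x ^ 2) := by
    simp only [pow_two]
    exact hc.mul_right (f' := φ)
  have hcw : HasCompactSupport w := (hcφ2.mul_right).mul_left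
  have hDw : ∀ x v, fderiv ℝ w x v = fderiv ℝ u x v * (φ x ^ 2 * Real.exp (ξ x)) +
      u x * (2 * φ x * fderiv ℝ φ x v + φ x ^ 2 * fderiv ℝ ξ x v) * Real.exp (ξ x) := by
    intro x v
    have h1 := (hu1.differentiable one_ne_zero x).hasFDerivAt
    have h2 := (hφ.differentiable one_ne_zero x).hasFDerivAt
    have h3 := (hξ.differentiable one_ne_zero x).hasFDerivAt
    have h := h1.fun_mul ((h2.fun_mul h2).fun_mul h3.exp)
    simp only [hwdef, pow_two]
    rw [h.fderiv]
    simp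
    ring
  have key := integral_heatLap_mul hu hw hcw
  have e1 : ∫ x, 2 * u x * heatLap u x * (φ x ^ 2 * Real.exp (ξ x)) =
      ∫ x, -2 * ∑ i : Fin n, fderiv ℝ u x (EuclideanSpace.single i 1) *
        fderiv ℝ w x (EuclideanSpace.single i 1) := by
    rw [integral_const_mul, neg_mul, ← mul_neg, ← key, ← integral_const_mul]
    congr 1; ext x; simp only [hwdef]; ring
  rw [e1]
  have cu := hu.continuous
  have cφ := hφ.continuous
  have cξ := hξ.continuous
  refine integral_mono ?_ ?_ ?_
  · refine Integrable.const_mul ?_ _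
    refine integrable_finsetSum _ fun i _ => ?_
    exact (((hu1.continuous_fderiv one_ne_zero).clm_apply continuous_const).mul
      ((hw.continuous_fderiv one_ne_zero).clm_apply
        continuous_const)).integrable_of_hasCompactSupport (hcw.fderiv_apply ℝ _).mul_left
  · refine Continuous.integrable_of_hasCompactSupport ?_ ?_
    · have := continuous_gradSq hφ
      have := continuous_gradSq hξ
      fun_prop
    · exact HasCompactSupport.mul_right (HasCompactSupport.mul_left
        ((hasCompactSupport_gradSq hc).mul_left.add hcφ2.mul_right))
  · intro x
    simp only [hDw, gradSq, Finset.mul_sum, ← Finset.sum_add_distrib, Finset.sum_mul]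
    refine Finset.sum_le_sum fun i _ => ?_
    set v := fderiv ℝ u x (EuclideanSpace.single i 1)
    set A := fderiv ℝ φ x (EuclideanSpace.single i 1)
    set B := fderiv ℝ ξ x (EuclideanSpace.single i 1)
    have hE := Real.exp_pos (ξ x)
    set e := Real.exp (ξ x)
    have : 0 ≤ ((φ x * v + 2 * u x * A) ^ 2 + (φ x * v + u x * φ x * B) ^ 2) * e := by positivity
    nlinarith [this]

lemma hasDerivAt_integral_of_continuousOn {n : ℕ} {H H' : ℝ → EuclideanSpace ℝ (Fin n) → ℝ}
    {r : ℝ} {b t : ℝ} (ht : t ∈ Ioo 0 b)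
    (hH : ContinuousOn (fun p : ℝ × EuclideanSpace ℝ (Fin n) => H p.1 p.2) (Ioo 0 b ×ˢ univ))
    (hH' : ContinuousOn (fun p : ℝ × EuclideanSpace ℝ (Fin n) => H' p.1 p.2) (Ioo 0 b ×ˢ univ))
    (hz : ∀ s x, r ≤ ‖x‖ → H s x = 0) (hz' : ∀ s x, r ≤ ‖x‖ → H' s x = 0)
    (hd : ∀ s ∈ Ioo 0 b, ∀ x, HasDerivAt (fun τ => H τ x) (H' s x) s) :
    HasDerivAt (fun s => ∫ x, H s x) (∫ x, H' t x) t := by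
  have slice : ∀ {K : ℝ → EuclideanSpace ℝ (Fin n) → ℝ},
      ContinuousOn (fun p : ℝ × EuclideanSpace ℝ (Fin n) => K p.1 p.2) (Ioo 0 b ×ˢ univ) →
      ∀ s ∈ Ioo 0 b, Continuous (K s) := fun hK s hs =>
    hK.comp_continuous (f := fun x => (s, x)) (by fun_prop) fun x => ⟨hs, mem_univ _⟩
  have supp : ∀ {k : EuclideanSpace ℝ (Fin n) → ℝ}, (∀ x, r ≤ ‖x‖ → k x = 0) →
      HasCompactSupport k := fun hk =>
    HasCompactSupport.of_support_subset_isCompact (isCompact_closedBall 0 r) fun x hx => by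
      rw [mem_closedBall_zero_iff]
      by_contra h
      exact hx (hk x (not_le.1 h).le)
  obtain ⟨ε, hε, hsub⟩ := Metric.nhds_basis_closedBall.mem_iff.1 (isOpen_Ioo.mem_nhds ht)
  have hcomp : IsCompact (closedBall t ε ×ˢ closedBall (0 : EuclideanSpace ℝ (Fin n)) r) :=
    (isCompact_closedBall _ _).prod (isCompact_closedBall _ _)
  obtain ⟨C, hC⟩ := hcomp.exists_bound_of_continuousOn
    (hH'.mono (prod_mono hsub (subset_univ _)))
  refine (hasDerivAt_integral_of_dominated_loc_of_deriv_le (s := closedBall t ε)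
    (bound := (closedBall (0 : EuclideanSpace ℝ (Fin n)) r).indicator fun _ => C)
    (closedBall_mem_nhds t hε) ?_ ?_ ?_ ?_ ?_ ?_).2
  · filter_upwards [isOpen_Ioo.mem_nhds ht] with s hs
    exact (slice hH s hs).aestronglyMeasurable
  · exact (slice hH t ht).integrable_of_hasCompactSupport (supp (hz t))
  · exact (slice hH' t ht).aestronglyMeasurable
  · refine Eventually.of_forall fun x s hs => ?_
    by_cases hx : x ∈ closedBall (0 : EuclideanSpace ℝ (Fin n)) r
    · rw [indicator_of_mem hx]
      exact hC (s, x) ⟨hs, hx⟩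
    · rw [indicator_of_notMem hx, hz' s x, norm_zero]
      rw [mem_closedBall_zero_iff] at hx
      exact (not_le.1 hx).le
  · exact (integrable_indicator_iff measurableSet_closedBall).2
      (integrableOn_const (isCompact_closedBall _ _).measure_ne_top)
  · exact Eventually.of_forall fun x s hs => hd s (hsub hs) x

/-- A nonnegative classical subsolution of the heat equation on `ℝⁿ × (0,1)`. -/
structure IsHeatSubsolution {n : ℕ} (f : ℝ → EuclideanSpace ℝ (Fin n) → ℝ) : Prop where
  contDiffOn : ContDiffOn ℝ 2 (fun p : ℝ × EuclideanSpace ℝ (Fin n) => f p.1 p.2)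
    (Ioo (0 : ℝ) 1 ×ˢ univ)
  nonneg : ∀ t ∈ Ioo (0 : ℝ) 1, ∀ x, 0 ≤ f t x
  deriv_le : ∀ t ∈ Ioo (0 : ℝ) 1, ∀ x, deriv (fun s => f s x) t ≤ heatLap (f t) x

namespace IsHeatSubsolution

variable {n : ℕ} {f : ℝ → EuclideanSpace ℝ (Fin n) → ℝ}

lemma contDiff (hf : IsHeatSubsolution f) {t : ℝ} (ht : t ∈ Ioo (0 : ℝ) 1) :
    ContDiff ℝ 2 (f t) :=
  hf.contDiffOn.comp_contDiff (f := fun x => (t, x)) (by fun_prop) fun _ => ⟨ht, mem_univ _⟩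

lemma isOpen_domain : IsOpen (Ioo (0 : ℝ) 1 ×ˢ (univ : Set (EuclideanSpace ℝ (Fin n)))) :=
  isOpen_Ioo.prod isOpen_univ

lemma hasDerivAt (hf : IsHeatSubsolution f) {t : ℝ} (ht : t ∈ Ioo (0 : ℝ) 1)
    (x : EuclideanSpace ℝ (Fin n)) : HasDerivAt (fun s => f s x)
      (fderiv ℝ (fun p : ℝ × EuclideanSpace ℝ (Fin n) => f p.1 p.2) (t, x) (1, 0)) t := by
  have h1 := ((hf.contDiffOn.contDiffAt (isOpen_domain.mem_nhds
    (show (t, x) ∈ _ from ⟨ht, mem_univ _⟩))).differentiableAt two_ne_zero).hasFDerivAt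
  exact h1.comp_hasDerivAt (f := fun s => (s, x)) t ((hasDerivAt_id t).prodMk (hasDerivAt_const t x))

lemma continuousOn_timeDeriv (hf : IsHeatSubsolution f) : ContinuousOn
    (fun p => fderiv ℝ (fun p : ℝ × EuclideanSpace ℝ (Fin n) => f p.1 p.2) p (1, 0))
    (Ioo (0 : ℝ) 1 ×ˢ univ) :=
  (hf.contDiffOn.continuousOn_fderiv_of_isOpen isOpen_domain (by norm_num)).clm_apply
    continuousOn_const

/-- Weighted energy inequality: along a heat subsolution, the `L²` norm with the weight
`φ² exp (-h / (s - t))`, where `|∇h|² ≤ h`, grows at most at the rate given by the cutoff. -/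
lemma integral_weight_le (hf : IsHeatSubsolution f) {φ h : EuclideanSpace ℝ (Fin n) → ℝ} {r : ℝ}
    (hφ : ContDiff ℝ 1 φ) (hφ0 : ∀ x, r ≤ ‖x‖ → φ x = 0) (hh : ContDiff ℝ 1 h)
    (hgrad : ∀ x, φ x ≠ 0 → gradSq h x ≤ h x) {t₀ t₁ s K : ℝ} (ht₀ : 0 < t₀) (ht : t₀ ≤ t₁)
    (ht₁ : t₁ < 1) (hs : t₁ < s)
    (hK : ∀ t ∈ Icc t₀ t₁, ∫ x, f t x ^ 2 * gradSq φ x * Real.exp (-h x / (s - t)) ≤ K) :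
    ∫ x, f t₁ x ^ 2 * (φ x ^ 2 * Real.exp (-h x / (s - t₁))) ≤
      (∫ x, f t₀ x ^ 2 * (φ x ^ 2 * Real.exp (-h x / (s - t₀)))) + 4 * K * (t₁ - t₀) := by
  set b := min 1 s with hb
  have hb1 : ∀ {t}, t ∈ Ioo 0 b → t ∈ Ioo (0 : ℝ) 1 := fun ht => ⟨ht.1, ht.2.trans_le (min_le_left _ _)⟩
  have hbs : ∀ {t}, t ∈ Ioo 0 b → 0 < s - t := fun ht => sub_pos.2 (ht.2.trans_le (min_le_right _ _))
  have hIcc : Icc t₀ t₁ ⊆ Ioo 0 b := fun t ht =>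
    ⟨ht₀.trans_le ht.1, ht.2.trans_lt (lt_min ht₁ hs)⟩
  have hc : HasCompactSupport φ :=
    HasCompactSupport.of_support_subset_isCompact (isCompact_closedBall 0 r) fun x hx => by
      rw [mem_closedBall_zero_iff]
      by_contra hlt
      exact hx (hφ0 x (not_le.1 hlt).le)
  have hcφ2 : HasCompactSupport (fun x => φ x ^ 2) := by
    simp only [pow_two]
    exact hc.mul_right (f' := φ)
  set ft : ℝ → EuclideanSpace ℝ (Fin n) → ℝ := fun t x =>
    fderiv ℝ (fun p : ℝ × EuclideanSpace ℝ (Fin n) => f p.1 p.2) (t, x) (1, 0) with hft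
  set H' : ℝ → EuclideanSpace ℝ (Fin n) → ℝ := fun t x =>
    2 * f t x * ft t x * (φ x ^ 2 * Real.exp (-h x / (s - t))) +
      f t x ^ 2 * (φ x ^ 2 * (Real.exp (-h x / (s - t)) * (-h x / (s - t) ^ 2))) with hH'
  have cφ := hφ.continuous
  have ch := hh.continuous
  have cf : ContinuousOn (fun p : ℝ × EuclideanSpace ℝ (Fin n) => f p.1 p.2) (Ioo 0 b ×ˢ univ) :=
    hf.contDiffOn.continuousOn.mono (prod_mono (fun _ => hb1) le_rfl)
  have cft : ContinuousOn (fun p : ℝ × EuclideanSpace ℝ (Fin n) => ft p.1 p.2)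
      (Ioo 0 b ×ˢ univ) :=
    hf.continuousOn_timeDeriv.mono (prod_mono (fun _ => hb1) le_rfl)
  have cdiv : ContinuousOn (fun p : ℝ × EuclideanSpace ℝ (Fin n) => -h p.2 / (s - p.1))
      (Ioo 0 b ×ˢ univ) :=
    ContinuousOn.div (by fun_prop) (by fun_prop) fun p hp => (hbs hp.1).ne'
  have cdiv2 : ContinuousOn (fun p : ℝ × EuclideanSpace ℝ (Fin n) => -h p.2 / (s - p.1) ^ 2)
      (Ioo 0 b ×ˢ univ) :=
    ContinuousOn.div (by fun_prop) (by fun_prop) fun p hp => pow_ne_zero 2 (hbs hp.1).ne'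
  have hderiv : ∀ t ∈ Ioo 0 b, HasDerivAt
      (fun t => ∫ x, f t x ^ 2 * (φ x ^ 2 * Real.exp (-h x / (s - t)))) (∫ x, H' t x) t := by
    intro t htb
    refine hasDerivAt_integral_of_continuousOn (r := r) htb ?_ ?_ ?_ ?_ ?_
    · fun_prop
    · simp only [hH']
      fun_prop
    · intro τ x hx
      simp [hφ0 x hx]
    · intro τ x hx
      simp [hH', hφ0 x hx]
    · intro τ hτ x
      have h1 := (hf.hasDerivAt (hb1 hτ) x).fun_pow 2
      have h2 : HasDerivAt (fun t => -h x / (s - t)) (-h x / (s - τ) ^ 2) τ := by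
        refine ((hasDerivAt_const τ (-h x)).fun_div ((hasDerivAt_id' τ).const_sub s)
          (hbs hτ).ne').congr_deriv ?_
        simp
      refine (h1.fun_mul (h2.exp.const_mul (φ x ^ 2))).congr_deriv ?_
      simp [hH', hft]
  have hle : ∀ t ∈ Icc t₀ t₁, ∫ x, H' t x ≤ 4 * K := by
    intro t htI
    have htb := hIcc htI
    have hst := hbs htb
    have hξ : ContDiff ℝ 1 (fun x => -h x / (s - t)) := hh.neg.div_const _
    have cft' : Continuous (ft t) := cft.comp_continuous (f := fun x => (t, x)) (by fun_prop)
      fun x => ⟨htb, mem_univ _⟩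
    have cu := (hf.contDiff (hb1 htb)).continuous
    have cL := continuous_heatLap (hf.contDiff (hb1 htb))
    have cgφ := continuous_gradSq hφ
    have cgξ := continuous_gradSq hξ
    have cξ := hξ.continuous
    have hgξ : ∀ x, gradSq (fun x => -h x / (s - t)) x = gradSq h x / (s - t) ^ 2 := by
      intro x
      simp only [gradSq, Finset.sum_div]
      refine Finset.sum_congr rfl fun i _ => ?_
      have := ((hh.differentiable one_ne_zero x).hasFDerivAt.fun_neg.mul_const ((s - t)⁻¹)).fderiv
      simp only [div_eq_mul_inv, this]
      simp [mul_pow, mul_comm]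
    have intA : Integrable (fun x =>
        2 * f t x * heatLap (f t) x * (φ x ^ 2 * Real.exp (-h x / (s - t)))) :=
      Continuous.integrable_of_hasCompactSupport (by fun_prop) hcφ2.mul_right.mul_left
    have intA' : Integrable (fun x =>
        2 * f t x * ft t x * (φ x ^ 2 * Real.exp (-h x / (s - t)))) :=
      Continuous.integrable_of_hasCompactSupport (by fun_prop) hcφ2.mul_right.mul_left
    have intB : Integrable (fun x =>
        f t x ^ 2 * (φ x ^ 2 * (Real.exp (-h x / (s - t)) * (-h x / (s - t) ^ 2)))) :=
      Continuous.integrable_of_hasCompactSupport (by fun_prop) hcφ2.mul_right.mul_left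
    have intC : Integrable (fun x => f t x ^ 2 * (4 * gradSq φ x + φ x ^ 2 *
        gradSq (fun x => -h x / (s - t)) x) * Real.exp (-h x / (s - t))) :=
      Continuous.integrable_of_hasCompactSupport (by fun_prop)
        (HasCompactSupport.mul_right (HasCompactSupport.mul_left
          ((hasCompactSupport_gradSq hc).mul_left.add hcφ2.mul_right)))
    have intD : Integrable (fun x =>
        4 * (f t x ^ 2 * gradSq φ x * Real.exp (-h x / (s - t)))) :=
      Continuous.integrable_of_hasCompactSupport (by fun_prop)
        (HasCompactSupport.mul_left (HasCompactSupport.mul_right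
          (hasCompactSupport_gradSq hc).mul_left))
    calc ∫ x, H' t x
        = (∫ x, 2 * f t x * ft t x * (φ x ^ 2 * Real.exp (-h x / (s - t)))) +
          ∫ x, f t x ^ 2 * (φ x ^ 2 * (Real.exp (-h x / (s - t)) * (-h x / (s - t) ^ 2))) :=
          integral_add intA' intB
      _ ≤ (∫ x, 2 * f t x * heatLap (f t) x * (φ x ^ 2 * Real.exp (-h x / (s - t)))) +
          ∫ x, f t x ^ 2 * (φ x ^ 2 * (Real.exp (-h x / (s - t)) * (-h x / (s - t) ^ 2))) := by
          gcongr ?_ + _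
          refine integral_mono intA' intA fun x => ?_
          have h0 := hf.nonneg t (hb1 htb) x
          have h1 : ft t x ≤ heatLap (f t) x :=
            (hf.hasDerivAt (hb1 htb) x).deriv.symm.le.trans (hf.deriv_le t (hb1 htb) x)
          dsimp only
          gcongr
      _ ≤ (∫ x, f t x ^ 2 * (4 * gradSq φ x + φ x ^ 2 *
            gradSq (fun x => -h x / (s - t)) x) * Real.exp (-h x / (s - t))) +
          ∫ x, f t x ^ 2 * (φ x ^ 2 * (Real.exp (-h x / (s - t)) * (-h x / (s - t) ^ 2))) := by
          gcongr ?_ + _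
          exact integral_heatLap_mul_weight_le (hf.contDiff (hb1 htb)) hφ hξ hc
      _ = ∫ x, (f t x ^ 2 * (4 * gradSq φ x + φ x ^ 2 *
            gradSq (fun x => -h x / (s - t)) x) * Real.exp (-h x / (s - t)) +
          f t x ^ 2 * (φ x ^ 2 * (Real.exp (-h x / (s - t)) * (-h x / (s - t) ^ 2)))) :=
          (integral_add intC intB).symm
      _ ≤ ∫ x, 4 * (f t x ^ 2 * gradSq φ x * Real.exp (-h x / (s - t))) := by
          refine integral_mono (intC.add intB) intD fun x => ?_
          dsimp only
          rw [hgξ]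
          have key : φ x ^ 2 * (gradSq h x / (s - t) ^ 2 + -h x / (s - t) ^ 2) ≤ 0 := by
            by_cases hx : φ x = 0
            · simp [hx]
            · refine mul_nonpos_of_nonneg_of_nonpos (sq_nonneg _) ?_
              rw [← add_div]
              exact div_nonpos_of_nonpos_of_nonneg (by linarith [hgrad x hx]) (sq_nonneg _)
          have := mul_nonpos_of_nonneg_of_nonpos
            (mul_nonneg (sq_nonneg (f t x)) (Real.exp_pos (-h x / (s - t))).le) key
          linarith
      _ = 4 * ∫ x, f t x ^ 2 * gradSq φ x * Real.exp (-h x / (s - t)) := integral_const_mul _ _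
      _ ≤ 4 * K := by gcongr; exact hK t htI
  have := (convex_Icc t₀ t₁).image_sub_le_mul_sub_of_deriv_le
    (f := fun t => ∫ x, f t x ^ 2 * (φ x ^ 2 * Real.exp (-h x / (s - t)))) (C := 4 * K)
    (fun t ht => (hderiv t (hIcc ht)).continuousAt.continuousWithinAt)
    (fun t ht => (hderiv t (hIcc (interior_subset ht))).differentiableAt.differentiableWithinAt)
    (fun t ht => by
      rw [(hderiv t (hIcc (interior_subset ht))).deriv]
      exact hle t (interior_subset ht))
    t₀ (left_mem_Icc.2 ht) t₁ (right_mem_Icc.2 ht) ht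
  linarith

end IsHeatSubsolution

/-- The square of the positive part, a `C¹` function. -/
noncomputable def posSq (y : ℝ) : ℝ := max y 0 ^ 2

lemma posSq_of_nonpos {y : ℝ} (hy : y ≤ 0) : posSq y = 0 := by simp [posSq, max_eq_right hy]

lemma posSq_of_nonneg {y : ℝ} (hy : 0 ≤ y) : posSq y = y ^ 2 := by simp [posSq, max_eq_left hy]

lemma posSq_nonneg (y : ℝ) : 0 ≤ posSq y := sq_nonneg _

lemma hasDerivAt_posSq (y : ℝ) : HasDerivAt posSq (2 * max y 0) y := by
  rcases lt_trichotomy y 0 with hy | rfl | hy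
  · rw [max_eq_right hy.le, mul_zero]
    refine (hasDerivAt_const y (0 : ℝ)).congr_of_eventuallyEq ?_
    filter_upwards [Iio_mem_nhds hy] with z hz using posSq_of_nonpos (le_of_lt hz)
  · simp only [max_self, mul_zero]
    rw [hasDerivAt_iff_isLittleO_nhds_zero]
    simp only [zero_add, smul_zero, sub_zero, posSq_of_nonpos le_rfl]
    refine (Asymptotics.IsBigO.of_bound 1 (Eventually.of_forall fun z => ?_)).trans_isLittleO
      (Asymptotics.isLittleO_pow_id (n := 2) one_lt_two)
    rw [one_mul, posSq, Real.norm_of_nonneg (sq_nonneg _), Real.norm_of_nonneg (sq_nonneg _)]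
    rcases le_total z 0 with h | h
    · simp [max_eq_right h, sq_nonneg]
    · simp [max_eq_left h]
  · rw [max_eq_left hy.le]
    have h : HasDerivAt (fun z : ℝ => z ^ 2) (2 * y) y := by simpa using hasDerivAt_pow 2 y
    refine h.congr_of_eventuallyEq ?_
    filter_upwards [Ioi_mem_nhds hy] with z hz using posSq_of_nonneg (le_of_lt hz)

lemma contDiff_posSq : ContDiff ℝ 1 posSq := by
  rw [contDiff_one_iff_deriv]
  refine ⟨fun y => (hasDerivAt_posSq y).differentiableAt, ?_⟩
  rw [show deriv posSq = fun y => 2 * max y 0 from funext fun y => (hasDerivAt_posSq y).deriv]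
  fun_prop

/-- A `C¹` step function, equal to `1` on `(-∞, 0]` and to `0` on `[1, ∞)`. -/
noncomputable def stepDown (y : ℝ) : ℝ := posSq (1 - posSq y)

lemma contDiff_stepDown : ContDiff ℝ 1 stepDown :=
  contDiff_posSq.comp (contDiff_const.sub contDiff_posSq)

lemma hasDerivAt_stepDown (y : ℝ) :
    HasDerivAt stepDown (-(4 * max (1 - posSq y) 0 * max y 0)) y :=
  ((hasDerivAt_posSq _).comp y ((hasDerivAt_posSq y).const_sub 1)).congr_deriv (by ring)

lemma stepDown_of_nonpos {y : ℝ} (hy : y ≤ 0) : stepDown y = 1 := by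
  rw [stepDown, posSq_of_nonpos hy, sub_zero, posSq_of_nonneg zero_le_one, one_pow]

lemma one_le_posSq {y : ℝ} (hy : 1 ≤ y) : 1 ≤ posSq y := by
  rw [posSq_of_nonneg (zero_le_one.trans hy)]
  exact one_le_pow₀ hy

lemma stepDown_of_one_le {y : ℝ} (hy : 1 ≤ y) : stepDown y = 0 :=
  posSq_of_nonpos (sub_nonpos.2 (one_le_posSq hy))

lemma stepDown_nonneg (y : ℝ) : 0 ≤ stepDown y := posSq_nonneg _

lemma stepDown_le_one (y : ℝ) : stepDown y ≤ 1 :=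
  pow_le_one₀ (le_max_right _ _) (max_le (by linarith [posSq_nonneg y]) zero_le_one)

lemma deriv_stepDown_sq_le (y : ℝ) : deriv stepDown y ^ 2 ≤ 16 := by
  rw [(hasDerivAt_stepDown y).deriv]
  rcases le_total 1 y with hy | hy
  · rw [max_eq_right (sub_nonpos.2 (one_le_posSq hy))]
    norm_num
  · have h1 : 0 ≤ max (1 - posSq y) 0 := le_max_right _ _
    have h2 : max (1 - posSq y) 0 ≤ 1 := max_le (by linarith [posSq_nonneg y]) zero_le_one
    have h3 : 0 ≤ max y 0 := le_max_right _ _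
    have h4 : max y 0 ≤ 1 := max_le hy zero_le_one
    have h5 : max (1 - posSq y) 0 * max y 0 ≤ 1 := mul_le_one₀ h2 h3 h4
    have h6 : 0 ≤ max (1 - posSq y) 0 * max y 0 := mul_nonneg h1 h3
    nlinarith

lemma deriv_stepDown_of_nonpos {y : ℝ} (hy : y ≤ 0) : deriv stepDown y = 0 := by
  rw [(hasDerivAt_stepDown y).deriv, max_eq_right hy, mul_zero, neg_zero]

lemma deriv_stepDown_of_one_le {y : ℝ} (hy : 1 ≤ y) : deriv stepDown y = 0 := by
  rw [(hasDerivAt_stepDown y).deriv, max_eq_right (sub_nonpos.2 (one_le_posSq hy)), mul_zero,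
    zero_mul, neg_zero]

lemma gradSq_radial {n : ℕ} {g : ℝ → ℝ} {g' : ℝ} {x : EuclideanSpace ℝ (Fin n)}
    (hg : HasDerivAt g g' (‖x‖ ^ 2)) :
    gradSq (fun x : EuclideanSpace ℝ (Fin n) => g (‖x‖ ^ 2)) x = 4 * ‖x‖ ^ 2 * g' ^ 2 := by
  have h := (hg.comp_hasFDerivAt x (hasStrictFDerivAt_norm_sq x).hasFDerivAt).fderiv
  rw [gradSq, EuclideanSpace.real_norm_sq_eq, Finset.mul_sum, Finset.sum_mul]
  refine Finset.sum_congr rfl fun i _ => ?_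
  change (fderiv ℝ (g ∘ fun x => ‖x‖ ^ 2) x _) ^ 2 = _
  rw [h]
  simp [EuclideanSpace.inner_single_right]
  ring

/-- A radial `C¹` cutoff, equal to `1` on the ball of radius `r` and supported in the ball of
radius `R`. -/
noncomputable def annularCutoff {n : ℕ} (r R : ℝ) (x : EuclideanSpace ℝ (Fin n)) : ℝ :=
  stepDown ((‖x‖ ^ 2 - r ^ 2) / (R ^ 2 - r ^ 2))

section annularCutoff

variable {n : ℕ} {r R : ℝ} {x : EuclideanSpace ℝ (Fin n)}

lemma contDiff_annularCutoff :
    ContDiff ℝ 1 (annularCutoff r R : EuclideanSpace ℝ (Fin n) → ℝ) :=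
  contDiff_stepDown.comp (((contDiff_norm_sq ℝ).sub contDiff_const).div_const _)

lemma annularCutoff_of_le (hr : 0 ≤ r) (hrR : r < R) (hx : ‖x‖ ≤ r) :
    annularCutoff r R x = 1 :=
  stepDown_of_nonpos (div_nonpos_of_nonpos_of_nonneg
    (by nlinarith [norm_nonneg x]) (by nlinarith))

lemma annularCutoff_of_ge (hr : 0 ≤ r) (hrR : r < R) (hx : R ≤ ‖x‖) :
    annularCutoff r R x = 0 :=
  stepDown_of_one_le ((one_le_div (by nlinarith)).2 (by nlinarith))

lemma gradSq_annularCutoff : gradSq (annularCutoff r R) x =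
    4 * ‖x‖ ^ 2 * (deriv stepDown ((‖x‖ ^ 2 - r ^ 2) / (R ^ 2 - r ^ 2)) / (R ^ 2 - r ^ 2)) ^ 2 := by
  have h := ((contDiff_stepDown.differentiable one_ne_zero
    ((‖x‖ ^ 2 - r ^ 2) / (R ^ 2 - r ^ 2))).hasDerivAt.comp (‖x‖ ^ 2)
      (((hasDerivAt_id' (‖x‖ ^ 2)).sub_const (r ^ 2)).div_const (R ^ 2 - r ^ 2)))
  refine (gradSq_radial h).trans ?_
  ring

lemma gradSq_annularCutoff_of_le (hr : 0 ≤ r) (hrR : r < R) (hx : ‖x‖ ≤ r) :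
    gradSq (annularCutoff r R) x = 0 := by
  rw [gradSq_annularCutoff, deriv_stepDown_of_nonpos (div_nonpos_of_nonpos_of_nonneg
    (by nlinarith [norm_nonneg x]) (by nlinarith))]
  simp

lemma gradSq_annularCutoff_of_ge (hr : 0 ≤ r) (hrR : r < R) (hx : R ≤ ‖x‖) :
    gradSq (annularCutoff r R) x = 0 := by
  rw [gradSq_annularCutoff, deriv_stepDown_of_one_le
    ((one_le_div (by nlinarith)).2 (by nlinarith))]
  simp

lemma gradSq_annularCutoff_le (hr : 0 ≤ r) (hrR : r < R) :
    gradSq (annularCutoff r R) x ≤ 64 / (R - r) ^ 2 := by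
  have hd : 0 < R - r := sub_pos.2 hrR
  rcases le_total R ‖x‖ with hx | hx
  · rw [gradSq_annularCutoff_of_ge hr hrR hx]
    positivity
  · rw [gradSq_annularCutoff, div_pow]
    have h1 := deriv_stepDown_sq_le ((‖x‖ ^ 2 - r ^ 2) / (R ^ 2 - r ^ 2))
    have h2 : ‖x‖ ^ 2 ≤ (R + r) ^ 2 := by gcongr; linarith
    have h3 : 0 < R + r := by linarith
    calc 4 * ‖x‖ ^ 2 * (deriv stepDown ((‖x‖ ^ 2 - r ^ 2) / (R ^ 2 - r ^ 2)) ^ 2 /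
          (R ^ 2 - r ^ 2) ^ 2)
        ≤ 4 * (R + r) ^ 2 * (16 / (R ^ 2 - r ^ 2) ^ 2) := by gcongr
      _ = 64 / (R - r) ^ 2 := by
        rw [show R ^ 2 - r ^ 2 = (R - r) * (R + r) by ring]
        field_simp
        ring

end annularCutoff

namespace IsHeatSubsolution

variable {n : ℕ} {f : ℝ → EuclideanSpace ℝ (Fin n) → ℝ}

lemma integrableOn_sq (hf : IsHeatSubsolution f) {t : ℝ} (ht : t ∈ Ioo (0 : ℝ) 1) (r : ℝ) :
    IntegrableOn (fun x => f t x ^ 2) (ball 0 r) :=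
  (((hf.contDiff ht).continuous.pow 2).continuousOn.integrableOn_compact
    (isCompact_closedBall 0 r)).mono_set ball_subset_closedBall

lemma setIntegral_sq_mono (hf : IsHeatSubsolution f) {t : ℝ} (ht : t ∈ Ioo (0 : ℝ) 1) {r R : ℝ}
    (hrR : r ≤ R) : ∫ x in ball 0 r, f t x ^ 2 ≤ ∫ x in ball 0 R, f t x ^ 2 :=
  setIntegral_mono_set (hf.integrableOn_sq ht R) (Eventually.of_forall fun _ => sq_nonneg _)
    (ball_subset_ball hrR).eventuallyLE

/-- Comparison of the `L²` norms on two concentric balls at two times, with an error supported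
in an annulus and damped by the Gaussian-type weight `exp (-h / (s - t))`. -/
lemma setIntegral_sq_le_of_weight (hf : IsHeatSubsolution f)
    {h : EuclideanSpace ℝ (Fin n) → ℝ} {r₀ r₁ r₂ κ M t₀ t₁ s : ℝ}
    (hr₁ : 0 ≤ r₁) (hr₀₁ : r₀ ≤ r₁) (hr₁₂ : r₁ < r₂) (hh : ContDiff ℝ 1 h)
    (hgrad : ∀ x, ‖x‖ < r₂ → gradSq h x ≤ h x) (hh0 : ∀ x, ‖x‖ < r₀ → h x = 0)
    (hκ0 : 0 ≤ κ) (hκ : ∀ x, r₁ ≤ ‖x‖ → κ ≤ h x)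
    (ht₀ : 0 < t₀) (ht : t₀ ≤ t₁) (ht₁ : t₁ < 1) (hs : t₁ < s)
    (hM : ∀ t ∈ Icc t₀ t₁, ∫ x in ball 0 r₂, f t x ^ 2 ≤ M) :
    ∫ x in ball 0 r₀, f t₁ x ^ 2 ≤ (∫ x in ball 0 r₂, f t₀ x ^ 2) +
      256 / (r₂ - r₁) ^ 2 * (Real.exp (-κ / (s - t₀)) * M) * (t₁ - t₀) := by
  have hI : ∀ {t}, t ∈ Icc t₀ t₁ → t ∈ Ioo (0 : ℝ) 1 := fun ht =>
    ⟨ht₀.trans_le ht.1, ht.2.trans_lt ht₁⟩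
  have hφ0 : ∀ x : EuclideanSpace ℝ (Fin n), r₂ ≤ ‖x‖ → annularCutoff r₁ r₂ x = 0 :=
    fun x hx => annularCutoff_of_ge hr₁ hr₁₂ hx
  have hφc : Continuous (annularCutoff r₁ r₂ : EuclideanSpace ℝ (Fin n) → ℝ) :=
    contDiff_annularCutoff.continuous
  have hh0' : ∀ x, ‖x‖ < r₂ → 0 ≤ h x := fun x hx => (gradSq_nonneg _ _).trans (hgrad x hx)
  have out : ∀ {x : EuclideanSpace ℝ (Fin n)}, x ∉ ball 0 r₂ → r₂ ≤ ‖x‖ := fun hx => by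
    simpa using hx
  have hd : 0 < r₂ - r₁ := sub_pos.2 hr₁₂
  have hweight : ∀ t, ∫ x, f t x ^ 2 * (annularCutoff r₁ r₂ x ^ 2 * Real.exp (-h x / (s - t))) =
      ∫ x in ball 0 r₂,
        f t x ^ 2 * (annularCutoff r₁ r₂ x ^ 2 * Real.exp (-h x / (s - t))) := fun t =>
    (setIntegral_eq_integral_of_forall_compl_eq_zero fun x hx => by simp [hφ0 x (out hx)]).symm
  have hint : ∀ t ∈ Icc t₀ t₁, IntegrableOn
      (fun x => f t x ^ 2 * (annularCutoff r₁ r₂ x ^ 2 * Real.exp (-h x / (s - t))))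
      (ball 0 r₂) := fun t ht => by
    have := (hf.contDiff (hI ht)).continuous
    have := hh.continuous
    exact (Continuous.continuousOn (by fun_prop)).integrableOn_compact
      (isCompact_closedBall 0 r₂) |>.mono_set ball_subset_closedBall
  have key := hf.integral_weight_le (K := 64 / (r₂ - r₁) ^ 2 * (Real.exp (-κ / (s - t₀)) * M))
    contDiff_annularCutoff hφ0 hh
    (fun x hx => hgrad x (not_le.1 fun hx' => hx (hφ0 x hx'))) ht₀ ht ht₁ hs ?_
  · have lower : ∫ x in ball 0 r₀, f t₁ x ^ 2 ≤
        ∫ x, f t₁ x ^ 2 * (annularCutoff r₁ r₂ x ^ 2 * Real.exp (-h x / (s - t₁))) := by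
      rw [hweight]
      refine le_trans (le_of_eq (setIntegral_congr_fun measurableSet_ball fun x hx => ?_))
        (setIntegral_mono_set (hint t₁ (right_mem_Icc.2 ht))
          (Eventually.of_forall fun x => by dsimp only [Pi.zero_apply]; positivity)
          (ball_subset_ball (hr₀₁.trans hr₁₂.le)).eventuallyLE)
      have hx' : ‖x‖ < r₀ := by simpa using hx
      simp [annularCutoff_of_le hr₁ hr₁₂ (hx'.le.trans hr₀₁), hh0 x hx']
    have upper : ∫ x, f t₀ x ^ 2 * (annularCutoff r₁ r₂ x ^ 2 * Real.exp (-h x / (s - t₀))) ≤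
        ∫ x in ball 0 r₂, f t₀ x ^ 2 := by
      rw [hweight]
      refine setIntegral_mono_on (hint t₀ (left_mem_Icc.2 ht))
        (hf.integrableOn_sq (hI (left_mem_Icc.2 ht)) _) measurableSet_ball fun x hx => ?_
      refine mul_le_of_le_one_right (sq_nonneg _) (mul_le_one₀
        (pow_le_one₀ (stepDown_nonneg _) (stepDown_le_one _)) (Real.exp_pos _).le ?_)
      refine Real.exp_le_one_iff.2 (div_nonpos_of_nonpos_of_nonneg ?_ (by linarith))
      linarith [hh0' x (by simpa using hx)]
    calc _ ≤ _ := lower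
      _ ≤ _ := key
      _ ≤ (∫ x in ball 0 r₂, f t₀ x ^ 2) +
          4 * (64 / (r₂ - r₁) ^ 2 * (Real.exp (-κ / (s - t₀)) * M)) * (t₁ - t₀) := by gcongr
      _ = _ := by ring
  · intro t htI
    have hst : 0 < s - t := by linarith [htI.2]
    have cu := (hf.contDiff (hI htI)).continuous
    have ch := hh.continuous
    have cg := continuous_gradSq (contDiff_annularCutoff (n := n) (r := r₁) (R := r₂))
    rw [← setIntegral_eq_integral_of_forall_compl_eq_zero (s := ball 0 r₂)
      fun x hx => by rw [gradSq_annularCutoff_of_ge hr₁ hr₁₂ (out hx)]; simp]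
    calc ∫ x in ball 0 r₂,
          f t x ^ 2 * gradSq (annularCutoff r₁ r₂) x * Real.exp (-h x / (s - t))
        ≤ ∫ x in ball 0 r₂,
          64 / (r₂ - r₁) ^ 2 * Real.exp (-κ / (s - t₀)) * f t x ^ 2 := by
          refine setIntegral_mono_on ?_ ((hf.integrableOn_sq (hI htI) _).const_mul _)
            measurableSet_ball fun x hx => ?_
          · exact (Continuous.continuousOn (by fun_prop)).integrableOn_compact
              (isCompact_closedBall 0 r₂) |>.mono_set ball_subset_closedBall
          · rcases le_total ‖x‖ r₁ with hx' | hx'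
            · rw [gradSq_annularCutoff_of_le hr₁ hr₁₂ hx']
              simp only [mul_zero, zero_mul]
              positivity
            · have h1 : Real.exp (-h x / (s - t)) ≤ Real.exp (-κ / (s - t₀)) := by
                rw [Real.exp_le_exp, neg_div, neg_div, neg_le_neg_iff]
                have := hκ x hx'
                have := hκ0.trans this
                have := htI.1
                gcongr
              have h2 := gradSq_annularCutoff_le (x := x) hr₁ hr₁₂
              calc _ ≤ f t x ^ 2 * (64 / (r₂ - r₁) ^ 2) * Real.exp (-κ / (s - t₀)) := by gcongr
                _ = _ := by ring
      _ = 64 / (r₂ - r₁) ^ 2 * Real.exp (-κ / (s - t₀)) * ∫ x in ball 0 r₂, f t x ^ 2 :=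
          integral_const_mul _ _
      _ ≤ 64 / (r₂ - r₁) ^ 2 * Real.exp (-κ / (s - t₀)) * M := by
          gcongr
          exact hM t htI
      _ = _ := by ring

lemma setIntegral_sq_nonneg (f : ℝ → EuclideanSpace ℝ (Fin n) → ℝ) (r t : ℝ) :
    0 ≤ ∫ x in ball 0 r, f t x ^ 2 :=
  integral_nonneg fun _ => sq_nonneg _

lemma ofReal_setIntegral_sq (hf : IsHeatSubsolution f) {t : ℝ} (ht : t ∈ Ioo (0 : ℝ) 1) (r : ℝ) :
    ENNReal.ofReal (∫ x in ball 0 r, f t x ^ 2) = ∫⁻ x in ball 0 r, ENNReal.ofReal (f t x ^ 2) :=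
  ofReal_integral_eq_lintegral_ofReal (hf.integrableOn_sq ht r)
    (Eventually.of_forall fun _ => sq_nonneg _)

lemma setIntegral_sq_le_add (hf : IsHeatSubsolution f) {r R M t₀ t₁ : ℝ} (hr : 0 ≤ r)
    (hrR : r < R) (ht₀ : 0 < t₀) (ht : t₀ ≤ t₁) (ht₁ : t₁ < 1)
    (hM : ∀ t ∈ Icc t₀ t₁, ∫ x in ball 0 R, f t x ^ 2 ≤ M) :
    ∫ x in ball 0 r, f t₁ x ^ 2 ≤
      (∫ x in ball 0 R, f t₀ x ^ 2) + 256 / (R - r) ^ 2 * M * (t₁ - t₀) := by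
  have := hf.setIntegral_sq_le_of_weight (h := fun _ => 0) (κ := 0) (s := t₁ + 1) hr le_rfl hrR
    contDiff_const (fun x _ => by simp [gradSq]) (fun _ _ => rfl) le_rfl (fun _ _ => le_rfl)
    ht₀ ht ht₁ (by linarith) hM
  simpa using this

lemma le_of_forall_le_setIntegral_add
    (hinit : ∀ R > 0, Tendsto (fun t => ∫ x in ball 0 R, f t x ^ 2) (nhdsWithin 0 (Ioi 0)) (nhds 0))
    {R c X t : ℝ} (hR : 0 < R) (ht : 0 < t)
    (h : ∀ t₀, 0 < t₀ → t₀ ≤ t → X ≤ (∫ x in ball 0 R, f t₀ x ^ 2) + c) : X ≤ c := by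
  refine ge_of_tendsto (b := X) (by simpa using (hinit R hR).add_const c) ?_
  filter_upwards [Ioc_mem_nhdsGT ht] with t₀ ht₀ using h t₀ ht₀.1 ht₀.2

lemma exists_setIntegral_sq_le (hf : IsHeatSubsolution f) {a R G α β : ℝ} (ha : 0 < a)
    (hG : 0 < G) (hgrowth : ∫⁻ t in Ioc (0 : ℝ) 1, ENNReal.ofReal (t ^ a) *
      ∫⁻ x in ball 0 R, ENNReal.ofReal (f t x ^ 2) ≤ ENNReal.ofReal G)
    (hα : 0 < α) (hαβ : α < β) (hβ : β < 1) :
    ∃ t ∈ Icc α β, ∫ x in ball 0 R, f t x ^ 2 ≤ 2 * G / ((β - α) * α ^ a) := by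
  by_contra! hcon
  have hαa : 0 < α ^ a := Real.rpow_pos_of_pos hα a
  have hd : 0 < β - α := sub_pos.2 hαβ
  have h1 : ∫⁻ _ in Icc α β, ENNReal.ofReal (2 * G / (β - α)) ≤
      ∫⁻ t in Icc α β, ENNReal.ofReal (t ^ a) * ∫⁻ x in ball 0 R, ENNReal.ofReal (f t x ^ 2) := by
    refine setLIntegral_mono' measurableSet_Icc fun t ht => ?_
    have ht' : t ∈ Ioo (0 : ℝ) 1 := ⟨hα.trans_le ht.1, ht.2.trans_lt hβ⟩
    rw [← hf.ofReal_setIntegral_sq ht', ← ENNReal.ofReal_mul (Real.rpow_nonneg ht'.1.le a)]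
    refine ENNReal.ofReal_le_ofReal ?_
    calc 2 * G / (β - α) = α ^ a * (2 * G / ((β - α) * α ^ a)) := by field_simp
      _ ≤ t ^ a * ∫ x in ball 0 R, f t x ^ 2 := by
        have := (hcon t ht).le
        have := ht.1
        have := Real.rpow_nonneg ht'.1.le a
        gcongr
  have h2 := h1.trans ((lintegral_mono_set
    (fun t ht => ⟨hα.trans_le ht.1, ht.2.trans hβ.le⟩ : Icc α β ⊆ Ioc (0 : ℝ) 1)).trans hgrowth)
  rw [setLIntegral_const, Real.volume_Icc, ← ENNReal.ofReal_mul (by positivity),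
    div_mul_cancel₀ _ hd.ne', ENNReal.ofReal_le_ofReal_iff hG.le] at h2
  linarith

lemma setIntegral_sq_le_absorb (hf : IsHeatSubsolution f)
    (hinit : ∀ R > 0, Tendsto (fun t => ∫ x in ball 0 R, f t x ^ 2) (nhdsWithin 0 (Ioi 0)) (nhds 0))
    {a G r R R' M ε : ℝ} (ha : 0 < a) (hG : 0 < G) (hr : 0 ≤ r) (hrR : r < R) (hRR' : R ≤ R')
    (hgrowth : ∫⁻ t in Ioc (0 : ℝ) 1, ENNReal.ofReal (t ^ a) *
      ∫⁻ x in ball 0 R', ENNReal.ofReal (f t x ^ 2) ≤ ENNReal.ofReal G)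
    (hM : ∀ t ∈ Ioo (0 : ℝ) 1, ∫ x in ball 0 R, f t x ^ 2 ≤ M) (hε : 0 < ε) :
    ∀ t ∈ Ioo (0 : ℝ) 1, ∫ x in ball 0 r, f t x ^ 2 ≤
      512 * ε / (R - r) ^ 2 * M + 2 * G / ε ^ (1 + a) := by
  intro t ht
  have hM0 : 0 ≤ M := (setIntegral_sq_nonneg f R t).trans (hM t ht)
  have hd : 0 < R - r := sub_pos.2 hrR
  have hεa : 0 < ε ^ (1 + a) := Real.rpow_pos_of_pos hε _
  rcases le_or_gt t (2 * ε) with hle | hlt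
  · have h1 : ∫ x in ball 0 r, f t x ^ 2 ≤ 512 * ε / (R - r) ^ 2 * M := by
      refine le_of_forall_le_setIntegral_add hinit (hr.trans_lt hrR) ht.1 fun t₀ h0 h0t => ?_
      have := hf.setIntegral_sq_le_add hr hrR h0 h0t ht.2
        fun τ hτ => hM τ ⟨h0.trans_le hτ.1, hτ.2.trans_lt ht.2⟩
      calc _ ≤ _ := this
        _ ≤ (∫ x in ball 0 R, f t₀ x ^ 2) + 256 / (R - r) ^ 2 * M * (2 * ε) := by
          gcongr
          linarith
        _ = _ := by ring
    have : 0 ≤ 2 * G / ε ^ (1 + a) := by positivity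
    linarith
  · obtain ⟨t₀, ht₀, h0⟩ := hf.exists_setIntegral_sq_le ha hG hgrowth
      (show 0 < t - ε by linarith) (show t - ε < t by linarith) ht.2
    have h0pos : 0 < t₀ := by linarith [ht₀.1]
    have h0' : t₀ ∈ Ioo (0 : ℝ) 1 := ⟨h0pos, ht₀.2.trans_lt ht.2⟩
    have h1 := hf.setIntegral_sq_le_add hr hrR h0pos ht₀.2 ht.2
        fun τ hτ => hM τ ⟨h0pos.trans_le hτ.1, hτ.2.trans_lt ht.2⟩
    have h2 := hf.setIntegral_sq_mono h0' hRR'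
    have h3 : 2 * G / ((t - (t - ε)) * (t - ε) ^ a) ≤ 2 * G / ε ^ (1 + a) := by
      rw [sub_sub_cancel, Real.rpow_add hε, Real.rpow_one]
      gcongr
      linarith
    have h4 : 256 / (R - r) ^ 2 * M * (t - t₀) ≤ 512 * ε / (R - r) ^ 2 * M := by
      calc _ ≤ 256 / (R - r) ^ 2 * M * (2 * ε) := by
            gcongr
            linarith [ht₀.1]
        _ = _ := by ring
    linarith

/-- The time-weighted `L²` growth of a heat subsolution with vanishing initial data controls its
unweighted `L²` norms, uniformly in time. -/
lemma exists_const_setIntegral_sq_le (hf : IsHeatSubsolution f)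
    (hinit : ∀ R > 0, Tendsto (fun t => ∫ x in ball 0 R, f t x ^ 2) (nhdsWithin 0 (Ioi 0)) (nhds 0))
    (hbdd : ∀ R, ∃ M, ∀ t ∈ Ioo (0 : ℝ) 1, ∫ x in ball 0 R, f t x ^ 2 ≤ M)
    {a : ℝ} (ha : 0 < a) {G : ℝ → ℝ} (hG : ∀ r > 0, 0 < G r)
    (hgrowth : ∀ r > 0, ∫⁻ t in Ioc (0 : ℝ) 1, ENNReal.ofReal (t ^ a) *
      ∫⁻ x in ball 0 r, ENNReal.ofReal (f t x ^ 2) ≤ ENNReal.ofReal (G r)) :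
    ∃ D > 0, ∀ R ≥ 1, ∀ t ∈ Ioo (0 : ℝ) 1, ∫ x in ball 0 R, f t x ^ 2 ≤ D * G (2 * R) := by
  set b : ℝ := 4 ^ (1 + a) with hb
  have hb1 : 1 < b := Real.one_lt_rpow (by norm_num) (by linarith)
  have hb0 : 0 < b := zero_lt_one.trans hb1
  set η : ℝ := 1 / (4096 * b) with hη
  have hη0 : 0 < η := by positivity
  have hηa : 0 < η ^ (1 + a) := Real.rpow_pos_of_pos hη0 _
  set D : ℝ := 2 / η ^ (1 + a) with hD
  have hD0 : 0 < D := by positivity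
  refine ⟨2 * D, by positivity, fun R hR t ht => ?_⟩
  have hR0 : 0 < R := zero_lt_one.trans_le hR
  have hG' := hG (2 * R) (by positivity)
  obtain ⟨M, hM⟩ := hbdd (2 * R)
  set θ : ℝ := 1 / (2 * b) with hθ
  have hθ0 : 0 < θ := by positivity
  have hθ1 : θ < 1 := by
    rw [hθ, div_lt_one (by positivity)]
    linarith
  set ρ : ℕ → ℝ := fun i => R * (2 - (1 / 2) ^ i) with hρ
  have hρ2 : ∀ i, ρ i ≤ 2 * R := fun i => by
    have : (0 : ℝ) < (1 / 2) ^ i := by positivity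
    simp only [hρ]
    nlinarith
  have hρ0 : ∀ i, 0 ≤ ρ i := fun i => by
    have : (1 / 2 : ℝ) ^ i ≤ 1 := pow_le_one₀ (by norm_num) (by norm_num)
    exact mul_nonneg hR0.le (by linarith)
  have hρd : ∀ i, ρ (i + 1) - ρ i = R * (1 / 2) ^ (i + 1) := fun i => by
    simp only [hρ, pow_succ]
    ring
  have claim : ∀ k i, ∀ t ∈ Ioo (0 : ℝ) 1,
      ∫ x in ball 0 (ρ i), f t x ^ 2 ≤ θ ^ k * M + 2 * D * b ^ i * G (2 * R) := by
    intro k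
    induction k with
    | zero =>
      intro i t ht
      have h1 := (hf.setIntegral_sq_mono ht (hρ2 i)).trans (hM t ht)
      have : 0 ≤ 2 * D * b ^ i * G (2 * R) := by positivity
      rw [pow_zero, one_mul]
      linarith
    | succ k ih =>
      intro i t ht
      have hlt : ρ i < ρ (i + 1) := by
        rw [← sub_pos, hρd]
        positivity
      have hε : 0 < η * (1 / 4) ^ i := by positivity
      have h1 := hf.setIntegral_sq_le_absorb hinit ha hG' (hρ0 i) hlt (hρ2 _)
        (hgrowth (2 * R) (by positivity)) (ih (i + 1)) hε t ht
      have hN : 0 ≤ θ ^ k * M + 2 * D * b ^ (i + 1) * G (2 * R) :=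
        (setIntegral_sq_nonneg f _ t).trans (ih (i + 1) t ht)
      have h2 : 512 * (η * (1 / 4) ^ i) / (ρ (i + 1) - ρ i) ^ 2 ≤ θ := by
        rw [hρd, div_le_iff₀ (by positivity)]
        have e1 : (R * (1 / 2) ^ (i + 1)) ^ 2 = R ^ 2 * ((1 / 4) * (1 / 4) ^ i) := by
          rw [mul_pow, ← pow_mul, mul_comm (i + 1) 2, pow_mul, ← pow_succ']
          norm_num
        have e2 : 512 * η = θ / 4 := by
          rw [hη, hθ]
          field_simp
          norm_num
        have e3 : 1 ≤ R ^ 2 := one_le_pow₀ hR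
        have e4 : 0 ≤ θ * ((1 / 4) * (1 / 4) ^ i) := by positivity
        rw [e1, ← mul_assoc, e2]
        nlinarith
      have h3 : 2 * G (2 * R) / (η * (1 / 4) ^ i) ^ (1 + a) = D * b ^ i * G (2 * R) := by
        rw [Real.mul_rpow hη0.le (by positivity), ← Real.rpow_pow_comm (by norm_num), one_div,
          Real.inv_rpow (by norm_num), ← hb, hD, inv_pow]
        field_simp
      have h4 : θ * b = 1 / 2 := by
        rw [hθ]
        field_simp
      calc _ ≤ _ := h1
        _ ≤ θ * (θ ^ k * M + 2 * D * b ^ (i + 1) * G (2 * R)) + D * b ^ i * G (2 * R) := by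
          rw [h3]
          gcongr
        _ = θ ^ (k + 1) * M + 2 * D * (θ * b) * b ^ i * G (2 * R) + D * b ^ i * G (2 * R) := by
          ring
        _ = _ := by
          rw [h4]
          ring
  have hlim : Tendsto (fun k : ℕ => θ ^ k * M + 2 * D * b ^ 0 * G (2 * R)) atTop
      (nhds (0 * M + 2 * D * b ^ 0 * G (2 * R))) :=
    ((tendsto_pow_atTop_nhds_zero_of_lt_one hθ0.le hθ1).mul_const M).add_const _
  have hfin := ge_of_tendsto' hlim fun k => claim k 0 t ht
  have hρ00 : ρ 0 = R := by
    simp only [hρ]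
    norm_num
  simpa [hρ00] using hfin

/-- Over a time step that is short relative to the growth of the `L²` norm, passing from the ball
of radius `R` to that of radius `4 R` costs only an error of order `R⁻²`. -/
lemma setIntegral_sq_le_step (hf : IsHeatSubsolution f) {D Λ R t₀ t₁ : ℝ} (hR : 0 < R)
    (hD : 0 ≤ D) (hΛ : 0 < Λ)
    (hE : ∀ t ∈ Ioo (0 : ℝ) 1, ∫ x in ball 0 (4 * R), f t x ^ 2 ≤ D * Real.exp Λ)
    (ht₀ : 0 < t₀) (ht : t₀ ≤ t₁) (ht₁ : t₁ < 1) (hstep : t₁ - t₀ ≤ 9 * R ^ 2 / (512 * Λ)) :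
    ∫ x in ball 0 R, f t₁ x ^ 2 ≤ (∫ x in ball 0 (4 * R), f t₀ x ^ 2) + 64 * D / R ^ 2 := by
  have hδ : 0 < 9 * R ^ 2 / (512 * Λ) := by positivity
  have hderiv : ∀ u : ℝ, HasDerivAt (fun u => R ^ 2 / 256 * posSq (u / R ^ 2 - 1))
      (max (u / R ^ 2 - 1) 0 / 128) u := fun u => by
    refine (((hasDerivAt_posSq _).comp u
      (((hasDerivAt_id' u).div_const (R ^ 2)).sub_const 1)).const_mul (R ^ 2 / 256)).congr_deriv ?_
    field_simp
    ring
  have key := hf.setIntegral_sq_le_of_weight (r₀ := R) (r₁ := 2 * R) (r₂ := 4 * R)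
    (h := fun x => R ^ 2 / 256 * posSq (‖x‖ ^ 2 / R ^ 2 - 1)) (κ := 9 * R ^ 2 / 256)
    (s := t₀ + 2 * (9 * R ^ 2 / (512 * Λ))) (by positivity) (by linarith) (by linarith)
    (contDiff_const.mul (contDiff_posSq.comp
      (((contDiff_norm_sq ℝ).div_const _).sub contDiff_const)))
    (fun x hx => ?_) (fun x hx => ?_) (by positivity) (fun x hx => ?_) ht₀ ht ht₁ (by linarith)
    (fun t ht => hE t ⟨ht₀.trans_le ht.1, ht.2.trans_lt ht₁⟩)
  · have e1 : -(9 * R ^ 2 / 256) / (t₀ + 2 * (9 * R ^ 2 / (512 * Λ)) - t₀) = -Λ := by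
      field_simp
      ring
    have e2 : Real.exp (-Λ) * (D * Real.exp Λ) = D := by
      rw [mul_left_comm, ← Real.exp_add, neg_add_cancel, Real.exp_zero, mul_one]
    rw [e1, e2] at key
    calc _ ≤ _ := key
      _ ≤ (∫ x in ball 0 (4 * R), f t₀ x ^ 2) + 256 / (4 * R - 2 * R) ^ 2 * D * 1 := by
        gcongr
        linarith
      _ = _ := by
        congr 1
        field_simp
        ring
  · rw [gradSq_radial (hderiv _), posSq]
    have h1 : ‖x‖ ^ 2 ≤ (4 * R) ^ 2 := by gcongr
    calc 4 * ‖x‖ ^ 2 * (max (‖x‖ ^ 2 / R ^ 2 - 1) 0 / 128) ^ 2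
        ≤ 4 * (4 * R) ^ 2 * (max (‖x‖ ^ 2 / R ^ 2 - 1) 0 / 128) ^ 2 := by gcongr
      _ = _ := by ring
  · have h1 : ‖x‖ ^ 2 / R ^ 2 ≤ 1 := (div_le_one (by positivity)).2 (by gcongr)
    simp [posSq_of_nonpos (sub_nonpos.2 h1)]
  · have h1 : 4 ≤ ‖x‖ ^ 2 / R ^ 2 := by
      rw [le_div_iff₀ (by positivity)]
      calc 4 * R ^ 2 = (2 * R) ^ 2 := by ring
        _ ≤ _ := by gcongr
    have h2 : 9 ≤ posSq (‖x‖ ^ 2 / R ^ 2 - 1) := by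
      rw [posSq_of_nonneg (by linarith)]
      nlinarith
    nlinarith [sq_nonneg R]

lemma setIntegral_sq_le_of_le_sum (hf : IsHeatSubsolution f)
    (hinit : ∀ R > 0, Tendsto (fun t => ∫ x in ball 0 R, f t x ^ 2) (nhdsWithin 0 (Ioi 0)) (nhds 0))
    {D : ℝ} (hD : 0 ≤ D) {Λ : ℕ → ℝ} (hΛ : ∀ m, 0 < Λ m)
    (hE : ∀ m, ∀ t ∈ Ioo (0 : ℝ) 1,
      ∫ x in ball 0 (4 * 4 ^ m), f t x ^ 2 ≤ D * Real.exp (Λ m)) (k : ℕ) :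
    ∀ m, ∀ t ∈ Ioo (0 : ℝ) 1,
      t ≤ ∑ j ∈ Finset.range k, 9 * (4 ^ (m + j)) ^ 2 / (512 * Λ (m + j)) →
      ∫ x in ball 0 (4 ^ m), f t x ^ 2 ≤ 128 * D / (4 ^ m) ^ 2 := by
  induction k with
  | zero =>
    intro m t ht hle
    simp only [Finset.range_zero, Finset.sum_empty] at hle
    exact absurd ht.1 (not_lt.2 hle)
  | succ k ih =>
    intro m t ht hle
    rw [Finset.sum_range_succ'] at hle
    simp only [add_zero, ← add_assoc, add_right_comm m _ 1] at hle
    have hpos : (0 : ℝ) < 4 ^ m := by positivity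
    have hstep : ∀ t₀, 0 < t₀ → t₀ ≤ t → t - t₀ ≤ 9 * (4 ^ m) ^ 2 / (512 * Λ m) →
        ∫ x in ball 0 (4 ^ m), f t x ^ 2 ≤
          (∫ x in ball 0 (4 * 4 ^ m), f t₀ x ^ 2) + 64 * D / (4 ^ m) ^ 2 :=
      fun t₀ h0 h1 h2 => hf.setIntegral_sq_le_step hpos hD (hΛ m) (hE m) h0 h1 ht.2 h2
    have hX : 0 ≤ D / (4 ^ m) ^ 2 := by positivity
    rcases le_or_gt t (9 * (4 ^ m) ^ 2 / (512 * Λ m)) with h | h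
    · have := le_of_forall_le_setIntegral_add hinit (by positivity) ht.1
        fun t₀ h0 h1 => hstep t₀ h0 h1 (by linarith)
      rw [mul_div_assoc] at this ⊢
      linarith
    · have hδ : 0 < 9 * (4 ^ m) ^ 2 / (512 * Λ m) := by
        have := hΛ m
        positivity
      set δ := 9 * (4 ^ m) ^ 2 / (512 * Λ m)
      have h1 := hstep (t - δ) (by linarith) (by linarith) (by linarith)
      have h2 := ih (m + 1) (t - δ) ⟨by linarith, by linarith [ht.2]⟩ (by linarith)
      rw [pow_succ' 4 m] at h2
      have h3 : 128 * D / (4 * 4 ^ m) ^ 2 = 8 * (D / (4 ^ m) ^ 2) := by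
        field_simp
        ring
      rw [h3] at h2
      rw [mul_div_assoc] at h1 ⊢
      linarith

end IsHeatSubsolution

lemma not_summable_of_lintegral_div_eq_top {L : ℝ → ℝ} (hL_pos : ∀ r > 0, 0 < L r)
    (hL_mono : ∀ r s, 0 < r → r ≤ s → L r ≤ L s)
    (hL_div : ∫⁻ r in Ioi (1 : ℝ), ENNReal.ofReal (r / L r) = ⊤) :
    ¬ Summable fun m : ℕ => 9 * (4 ^ m) ^ 2 / (512 * L (8 * 4 ^ m)) := by
  intro hsum
  set δ : ℕ → ℝ := fun m => 9 * (4 ^ m) ^ 2 / (512 * L (8 * 4 ^ m)) with hδ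
  have hpos : ∀ m : ℕ, (0 : ℝ) < 8 * 4 ^ m := fun m => by positivity
  have hδ0 : ∀ m, 0 ≤ δ m := fun m => by
    have := hL_pos _ (hpos m)
    positivity
  have hcover : Ioi (1 : ℝ) ⊆ Ioc 1 8 ∪ ⋃ m : ℕ, Ico (8 * 4 ^ m) (8 * 4 ^ (m + 1)) := by
    intro r hr
    rcases le_or_gt r 8 with h | h
    · exact Or.inl ⟨hr, h⟩
    · obtain ⟨m, h1, h2⟩ := exists_nat_pow_near (show 1 ≤ r / 8 by linarith)
        (show (1 : ℝ) < 4 by norm_num)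
      exact Or.inr (mem_iUnion.2 ⟨m, by linarith, by linarith⟩)
  have bound : ∀ (s : Set ℝ) (A B : ℝ), MeasurableSet s → 0 < A → (∀ r ∈ s, A ≤ r ∧ r ≤ B) →
      ∫⁻ r in s, ENNReal.ofReal (r / L r) ≤ ENNReal.ofReal (B / L A) * volume s := by
    intro s A B hs hA h
    rw [← setLIntegral_const]
    refine setLIntegral_mono' hs fun r hr => ENNReal.ofReal_le_ofReal ?_
    have h1 := hL_mono A r hA (h r hr).1
    have h2 := hL_pos A hA
    have h3 := (h r hr).2
    have h4 := hA.le.trans ((h r hr).1.trans h3)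
    gcongr
  have hpiece : ∀ m : ℕ, ∫⁻ r in Ico ((8 : ℝ) * 4 ^ m) (8 * 4 ^ (m + 1)),
      ENNReal.ofReal (r / L r) ≤ ENNReal.ofReal (131072 / 3 * δ m) := by
    intro m
    have hLm := hL_pos _ (hpos m)
    refine (bound _ _ _ measurableSet_Ico (hpos m) fun r hr => ⟨hr.1, hr.2.le⟩).trans ?_
    rw [Real.volume_Ico, ← ENNReal.ofReal_mul (by positivity)]
    refine ENNReal.ofReal_le_ofReal (le_of_eq ?_)
    simp only [hδ]
    field_simp
    ring
  have hfin : ∫⁻ r in Ioi (1 : ℝ), ENNReal.ofReal (r / L r) < ⊤ := by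
    calc ∫⁻ r in Ioi (1 : ℝ), ENNReal.ofReal (r / L r)
        ≤ ∫⁻ r in Ioc 1 8 ∪ ⋃ m : ℕ, Ico ((8 : ℝ) * 4 ^ m) (8 * 4 ^ (m + 1)),
            ENNReal.ofReal (r / L r) := lintegral_mono_set hcover
      _ ≤ (∫⁻ r in Ioc (1 : ℝ) 8, ENNReal.ofReal (r / L r)) +
          ∫⁻ r in ⋃ m : ℕ, Ico ((8 : ℝ) * 4 ^ m) (8 * 4 ^ (m + 1)), ENNReal.ofReal (r / L r) :=
          lintegral_union_le _ _ _
      _ ≤ ENNReal.ofReal (8 / L 1) * volume (Ioc (1 : ℝ) 8) +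
          ∑' m : ℕ, ENNReal.ofReal (131072 / 3 * δ m) := by
          refine add_le_add (bound _ _ _ measurableSet_Ioc one_pos fun r hr => ⟨hr.1.le, hr.2⟩)
            ((lintegral_iUnion_le _ _).trans (ENNReal.tsum_le_tsum hpiece))
      _ < ⊤ := by
          refine ENNReal.add_lt_top.2 ⟨ENNReal.mul_lt_top ENNReal.ofReal_lt_top (by simp), ?_⟩
          exact (hsum.mul_left (131072 / 3)).tsum_ofReal_lt_top
  exact hfin.ne hL_div

namespace IsHeatSubsolution

variable {n : ℕ} {f : ℝ → EuclideanSpace ℝ (Fin n) → ℝ}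

lemma exists_setIntegral_sq_bound
    (hcont : ContinuousOn (fun p : ℝ × EuclideanSpace ℝ (Fin n) => f p.1 p.2) (Ioc 0 1 ×ˢ univ))
    (hinit : ∀ R > 0, Tendsto (fun t => ∫ x in ball 0 R, f t x ^ 2) (nhdsWithin 0 (Ioi 0)) (nhds 0))
    (R : ℝ) : ∃ M, ∀ t ∈ Ioo (0 : ℝ) 1, ∫ x in ball 0 R, f t x ^ 2 ≤ M := by
  rcases le_or_gt R 0 with hR | hR
  · exact ⟨0, fun t _ => by simp [ball_eq_empty.2 hR]⟩
  have h1 := (hinit R hR).eventually (gt_mem_nhds one_pos)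
  obtain ⟨ε, hε, hsub⟩ := mem_nhdsGT_iff_exists_Ioo_subset.1 h1
  have hε0 : (0 : ℝ) < ε := hε
  obtain ⟨C, hC⟩ := ((isCompact_Icc (a := ε) (b := 1)).prod
    (isCompact_closedBall (0 : EuclideanSpace ℝ (Fin n)) R)).exists_bound_of_continuousOn
    ((hcont.pow 2).mono (prod_mono (fun t ht => ⟨hε0.trans_le ht.1, ht.2⟩) (subset_univ _)))
  refine ⟨max 1 (C * volume.real (ball (0 : EuclideanSpace ℝ (Fin n)) R)), fun t ht => ?_⟩
  rcases lt_or_ge t ε with h | h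
  · exact (show _ < (1 : ℝ) from hsub ⟨ht.1, h⟩).le.trans (le_max_left _ _)
  · refine le_trans ((le_abs_self _).trans ?_) (le_max_right _ _)
    exact norm_setIntegral_le_of_norm_le_const measure_ball_lt_top
      fun x hx => hC (t, x) ⟨⟨h, ht.2.le⟩, ball_subset_closedBall hx⟩

lemma eq_zero_of_setIntegral_sq_eq_zero (hf : IsHeatSubsolution f) {t : ℝ}
    (ht : t ∈ Ioo (0 : ℝ) 1) {r : ℝ} (h : ∫ x in ball 0 r, f t x ^ 2 = 0)
    {x : EuclideanSpace ℝ (Fin n)} (hx : ‖x‖ < r) : f t x = 0 := by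
  rw [integral_eq_zero_iff_of_nonneg (fun _ => sq_nonneg _) (hf.integrableOn_sq ht r)] at h
  have := Measure.eqOn_open_of_ae_eq h isOpen_ball
    ((hf.contDiff ht).continuous.pow 2).continuousOn continuousOn_const
    (mem_ball_zero_iff.2 hx)
  simpa using this

/-- Uniqueness class for heat subsolutions with time-weighted `L²` growth, on the open time
interval. -/
lemma eq_zero (hf : IsHeatSubsolution f)
    (hinit : ∀ R > 0, Tendsto (fun t => ∫ x in ball 0 R, f t x ^ 2) (nhdsWithin 0 (Ioi 0)) (nhds 0))
    (hbdd : ∀ R, ∃ M, ∀ t ∈ Ioo (0 : ℝ) 1, ∫ x in ball 0 R, f t x ^ 2 ≤ M)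
    {a : ℝ} (ha : 0 < a) {L : ℝ → ℝ} (hL_pos : ∀ r > 0, 0 < L r)
    (hL_mono : ∀ r s, 0 < r → r ≤ s → L r ≤ L s)
    (hL_div : ∫⁻ r in Ioi (1 : ℝ), ENNReal.ofReal (r / L r) = ⊤)
    (hgrowth : ∀ r > 0, ∫⁻ t in Ioc (0 : ℝ) 1, ENNReal.ofReal (t ^ a) *
      ∫⁻ x in ball 0 r, ENNReal.ofReal (f t x ^ 2) ≤ ENNReal.ofReal (Real.exp (L r))) :
    ∀ t ∈ Ioo (0 : ℝ) 1, ∀ x, f t x = 0 := by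
  intro t ht x
  obtain ⟨D, hD, hE⟩ := hf.exists_const_setIntegral_sq_le hinit hbdd ha
    (G := fun r => Real.exp (L r)) (fun _ _ => Real.exp_pos _) hgrowth
  have hdecay : ∀ m : ℕ, ∫ x in ball 0 (4 ^ m), f t x ^ 2 ≤ 128 * D / (4 ^ m) ^ 2 := by
    intro m
    have hnot := not_summable_of_lintegral_div_eq_top hL_pos hL_mono hL_div
    rw [← summable_nat_add_iff m, not_summable_iff_tendsto_nat_atTop_of_nonneg] at hnot
    · obtain ⟨k, hk⟩ := (hnot.eventually_ge_atTop t).exists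
      refine hf.setIntegral_sq_le_of_le_sum hinit hD.le (Λ := fun m => L (8 * 4 ^ m))
        (fun m => hL_pos _ (by positivity)) (fun m τ hτ => ?_) k m t ht
        (by simpa only [add_comm m] using hk)
      have h4 : (1 : ℝ) ≤ 4 ^ m := one_le_pow₀ (by norm_num)
      have := hE (4 * 4 ^ m) (by linarith) τ hτ
      rwa [← mul_assoc, show (2 : ℝ) * 4 = 8 by norm_num] at this
    · intro j
      have := hL_pos (8 * 4 ^ (j + m)) (by positivity)
      positivity
  have hlim : Tendsto (fun m : ℕ => 128 * D / ((4 : ℝ) ^ m) ^ 2) atTop (nhds 0) :=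
    Tendsto.div_atTop tendsto_const_nhds
      ((tendsto_pow_atTop two_ne_zero).comp (tendsto_pow_atTop_atTop_of_one_lt (by norm_num)))
  have hzero : ∫ y in ball 0 (‖x‖ + 1), f t y ^ 2 ≤ 0 := by
    refine ge_of_tendsto hlim ?_
    filter_upwards [(tendsto_pow_atTop_atTop_of_one_lt
      (show (1 : ℝ) < 4 by norm_num)).eventually_ge_atTop (‖x‖ + 1)] with m hm
    exact (hf.setIntegral_sq_mono ht hm).trans (hdecay m)
  exact hf.eq_zero_of_setIntegral_sq_eq_zero ht
    (le_antisymm hzero (setIntegral_sq_nonneg f _ _)) (lt_add_one _)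

end IsHeatSubsolution

/-- **Theorem 1 (Euclidean case).** A nonnegative smooth subsolution of the heat
equation on `ℝⁿ × (0,1]` with zero initial data in `L²_loc` and time-weighted
`L²` growth `∫₀¹ tᵃ ∫_{B(0,r)} f² ≤ e^{L(r)}`, where `L` is positive nondecreasing
with `∫₁^∞ r / L(r) dr = ∞`, vanishes identically. -/
theorem heat_uniqueness_time_weighted_L2 {n : ℕ}
    (f : ℝ → EuclideanSpace ℝ (Fin n) → ℝ)
    (hf_smooth : ContDiffOn ℝ (⊤ : ℕ∞)
      (fun p : ℝ × EuclideanSpace ℝ (Fin n) => f p.1 p.2) (Set.Ioc (0:ℝ) 1 ×ˢ Set.univ))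
    (hf_nonneg : ∀ t ∈ Set.Ioc (0:ℝ) 1, ∀ x, 0 ≤ f t x)
    (hf_subsol : ∀ t ∈ Set.Ioc (0:ℝ) 1, ∀ x, deriv (fun s => f s x) t ≤ heatLap (f t) x)
    (hf_init : ∀ R > (0:ℝ),
      Tendsto (fun t => ∫⁻ x in ball (0 : EuclideanSpace ℝ (Fin n)) R,
        ENNReal.ofReal ((f t x) ^ 2)) (nhdsWithin 0 (Set.Ioi 0)) (nhds 0))
    (a : ℝ) (ha : 0 < a)
    (L : ℝ → ℝ)
    (hL_pos : ∀ r > (0:ℝ), 0 < L r)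
    (hL_mono : ∀ r s : ℝ, 0 < r → r ≤ s → L r ≤ L s)
    (hL_div : ∫⁻ r in Set.Ioi (1:ℝ), ENNReal.ofReal (r / L r) = ⊤)
    (hf_growth : ∀ r > (0:ℝ),
      ∫⁻ t in Set.Ioc (0:ℝ) 1, ENNReal.ofReal (t ^ a) *
        ∫⁻ x in ball (0 : EuclideanSpace ℝ (Fin n)) r, ENNReal.ofReal ((f t x) ^ 2)
      ≤ ENNReal.ofReal (Real.exp (L r))) :
    ∀ t ∈ Set.Ioc (0:ℝ) 1, ∀ x, f t x = 0 := by
  have hsub : Ioo (0 : ℝ) 1 ×ˢ (univ : Set (EuclideanSpace ℝ (Fin n))) ⊆ Ioc 0 1 ×ˢ univ :=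
    prod_mono Ioo_subset_Ioc_self le_rfl
  have hf : IsHeatSubsolution f :=
    { contDiffOn := (hf_smooth.mono hsub).of_le (WithTop.coe_le_coe.2 (le_top : (2 : ℕ∞) ≤ ⊤))
      nonneg := fun t ht => hf_nonneg t (Ioo_subset_Ioc_self ht)
      deriv_le := fun t ht => hf_subsol t (Ioo_subset_Ioc_self ht) }
  have hinit : ∀ R > 0,
      Tendsto (fun t => ∫ x in ball 0 R, f t x ^ 2) (nhdsWithin 0 (Ioi 0)) (nhds 0) := by
    intro R hR
    refine ((ENNReal.tendsto_toReal ENNReal.zero_ne_top).comp (hf_init R hR)).congr' ?_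
    filter_upwards [Ioo_mem_nhdsGT one_pos] with t ht
    rw [Function.comp_apply, ← hf.ofReal_setIntegral_sq ht,
      ENNReal.toReal_ofReal (IsHeatSubsolution.setIntegral_sq_nonneg f R t)]
  have hbdd := IsHeatSubsolution.exists_setIntegral_sq_bound hf_smooth.continuousOn hinit
  have hzero := hf.eq_zero hinit hbdd ha hL_pos hL_mono hL_div hf_growth
  intro t ht x
  rcases ht.2.lt_or_eq with h | rfl
  · exact hzero t ⟨ht.1, h⟩ x
  · have hcont : ContinuousWithinAt (fun s => f s x) (Ioc 0 1) 1 :=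
      (hf_smooth.continuousOn (1, x) ⟨ht, mem_univ _⟩).comp
        (f := fun s : ℝ => (s, x)) (by fun_prop) fun s hs => ⟨hs, mem_univ _⟩
    have hlim : Tendsto (fun s => f s x) (nhdsWithin 1 (Iio 1)) (nhds (f 1 x)) :=
      hcont.mono_left (nhdsWithin_le_iff.2 (Ioc_mem_nhdsLT_of_mem ht))
    refine tendsto_nhds_unique (hlim.congr' ?_) tendsto_const_nhds
    filter_upwards [Ioo_mem_nhdsLT (one_pos (α := ℝ))] with s hs using hzero s hs x
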